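/- arXiv:2204.11401 — 2 statements merged into one kernel-verified Lean document; each statement's English description precedes it below -/
import Mathlib

section
/- There exists a constant C such that for every integer ℓ ≥ 1 and every x ∈ ℝ, |N_{ℓ,b}(x) − N_b(x)| ≤ C·(3/(b+2))^ℓ; that is, the normalized eigenvalue counting functions N_{ℓ,b} converge uniformly to N_b at a geometric rate. -/
open Set MeasureTheory

/-- The spectral decimation function `R_b`. -/
noncomputable def Rb (b : ℕ) : ℝ → ℝ :=
  fun z => (z / (b : ℝ)) * (((b : ℝ) + 1) * z - (2 * (b : ℝ) + 1)) *
    (((b : ℝ) + 1) * z - ((b : ℝ) + 2))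

/-- The exceptional set `E_b = {1/(b+1), (2b+1)/(b+1)}`. -/
noncomputable def Eb (b : ℕ) : Set ℝ :=
  {1 / ((b : ℝ) + 1), (2 * (b : ℝ) + 1) / ((b : ℝ) + 1)}

/-- The `m`-th preimage set `P_m = {x : R_b^∘m(x) ∈ E_b}`. -/
noncomputable def Pm (b m : ℕ) : Set ℝ := {x : ℝ | (Rb b)^[m] x ∈ Eb b}

/-- The density of states `ν_b = Σ_m ((b−1)/(2(b+2)^{m+1})) Σ_{λ ∈ P_m} δ_λ`. -/
noncomputable def nub (b : ℕ) : Measure ℝ :=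
  Measure.sum fun m : ℕ =>
    ENNReal.ofReal (((b : ℝ) - 1) / (2 * ((b : ℝ) + 2) ^ (m + 1))) •
      Measure.sum fun lam : Pm b m => Measure.dirac (lam : ℝ)

/-- The level-`ℓ` density of states
`ν_{ℓ,b} = Σ_{m=0}^{ℓ−1} (((b−1)(b+2)^{ℓ−m−1}+2)/(2((b+2)^ℓ−1))) Σ_{λ ∈ P_m} δ_λ`. -/
noncomputable def nuLb (b ℓ : ℕ) : Measure ℝ :=
  Measure.sum fun m : Fin ℓ =>
    ENNReal.ofReal ((((b : ℝ) - 1) * ((b : ℝ) + 2) ^ (ℓ - (m : ℕ) - 1) + 2) /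
        (2 * (((b : ℝ) + 2) ^ ℓ - 1))) •
      Measure.sum fun lam : Pm b (m : ℕ) => Measure.dirac (lam : ℝ)

/-- The integrated density of states `N_b(x) = ν_b((−∞, x])`. -/
noncomputable def Nb (b : ℕ) (x : ℝ) : ℝ := (nub b (Iic x)).toReal

/-- The level-`ℓ` normalized eigenvalue counting function `N_{ℓ,b}(x) = ν_{ℓ,b}((−∞, x])`. -/
noncomputable def NLb (b ℓ : ℕ) (x : ℝ) : ℝ := (nuLb b ℓ (Iic x)).toReal

lemma Rb_fiber (b : ℕ) (hb : 2 ≤ b) (a : ℝ) :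
    ∃ F : Finset ℝ, F.card ≤ 3 ∧ ∀ x, Rb b x = a → x ∈ F := by
  have hb0 : (b : ℝ) ≠ 0 := by positivity
  let P : Cubic ℝ := ⟨((b : ℝ) + 1) ^ 2 / b, -(3 * ((b : ℝ) + 1) ^ 2 / b),
    (2 * (b : ℝ) + 1) * ((b : ℝ) + 2) / b, -a⟩
  have hP : P.toPoly ≠ 0 := Cubic.ne_zero_of_a_ne_zero (by
    change ((b : ℝ) + 1) ^ 2 / b ≠ 0
    positivity)
  classical
  refine ⟨P.roots.toFinset, (Multiset.toFinset_card_le _).trans ?_, fun x hx => ?_⟩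
  · have h1 := Polynomial.card_roots' P.toPoly
    have h2 : P.toPoly.natDegree = 3 := Cubic.natDegree_of_a_ne_zero (by
      change ((b : ℝ) + 1) ^ 2 / b ≠ 0
      positivity)
    rw [h2] at h1
    exact h1
  · rw [Multiset.mem_toFinset, Cubic.mem_roots_iff hP]
    change ((b : ℝ) + 1) ^ 2 / b * x ^ 3 + -(3 * ((b : ℝ) + 1) ^ 2 / b) * x ^ 2 +
      (2 * (b : ℝ) + 1) * ((b : ℝ) + 2) / b * x + -a = 0
    rw [← hx]
    unfold Rb
    field_simp
    ring

lemma Pm_finset (b : ℕ) (hb : 2 ≤ b) (m : ℕ) :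
    ∃ F : Finset ℝ, F.card ≤ 2 * 3 ^ m ∧ (F : Set ℝ) = Pm b m := by
  classical
  induction m with
  | zero =>
    refine ⟨{1 / ((b : ℝ) + 1), (2 * (b : ℝ) + 1) / ((b : ℝ) + 1)}, ?_, ?_⟩
    · simpa using Finset.card_le_two
    · ext x
      simp [Pm, Eb]
  | succ m ih =>
    obtain ⟨F, hF, hFP⟩ := ih
    choose G hG hG2 using Rb_fiber b hb
    refine ⟨(F.biUnion G).filter (fun x => Rb b x ∈ F), ?_, ?_⟩
    · calc _ ≤ (F.biUnion G).card := Finset.card_filter_le _ _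
        _ ≤ F.card * 3 := Finset.card_biUnion_le_card_mul _ _ _ (fun a _ => hG a)
        _ ≤ (2 * 3 ^ m) * 3 := by gcongr
        _ = _ := by ring
    · ext x
      have h : x ∈ Pm b (m + 1) ↔ Rb b x ∈ F := by
        rw [← Finset.mem_coe, hFP]
        simp [Pm, Function.iterate_succ_apply]
      rw [h]
      simp only [Finset.coe_filter, Finset.mem_biUnion, mem_setOf_eq]
      exact ⟨fun h => h.2, fun h => ⟨⟨_, h, hG2 _ x rfl⟩, h⟩⟩

lemma dirac_sum_le (b : ℕ) (hb : 2 ≤ b) (m : ℕ) (x : ℝ) :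
    (Measure.sum fun lam : Pm b m => Measure.dirac (lam : ℝ)) (Iic x)
      ≤ ENNReal.ofReal (2 * 3 ^ m) := by
  obtain ⟨F, hF, hFP⟩ := Pm_finset b hb m
  rw [← hFP, Measure.sum_apply _ measurableSet_Iic]
  calc _ ≤ ∑' _ : (F : Set ℝ), (1 : ENNReal) := ENNReal.tsum_le_tsum fun i => prob_le_one
    _ = ((F.card : ℕ) : ENNReal) := by
      rw [tsum_fintype]
      simp
    _ ≤ ((2 * 3 ^ m : ℕ) : ENNReal) := by exact_mod_cast hF
    _ = _ := by
      rw [← ENNReal.ofReal_natCast]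
      push_cast
      rfl

/-- There is a constant `C` such that for every `ℓ ≥ 1` and every `x ∈ ℝ`,
`|N_{ℓ,b}(x) − N_b(x)| ≤ C·(3/(b+2))^ℓ`: the normalized eigenvalue counting functions
converge uniformly to `N_b` at a geometric rate. -/
theorem counting_functions_converge_uniformly (b : ℕ) (hb : 2 ≤ b) :
    ∃ C : ℝ, ∀ ℓ : ℕ, 1 ≤ ℓ → ∀ x : ℝ,
      |NLb b ℓ x - Nb b x| ≤ C * (3 / ((b : ℝ) + 2)) ^ ℓ := by
  have hq : (4 : ℝ) ≤ (b : ℝ) + 2 := by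
    have : (2 : ℝ) ≤ b := by exact_mod_cast hb
    linarith
  have hb1 : (0 : ℝ) ≤ (b : ℝ) - 1 := by linarith
  refine ⟨8, fun ℓ hℓ x => ?_⟩
  let cE : ℕ → ENNReal := fun m =>
    (Measure.sum fun lam : Pm b m => Measure.dirac (lam : ℝ)) (Iic x)
  have hcE : ∀ m, cE m ≤ ENNReal.ofReal (2 * 3 ^ m) := fun m => dirac_sum_le b hb m x
  have hcT : ∀ m, cE m ≠ ⊤ := fun m => ne_top_of_le_ne_top ENNReal.ofReal_ne_top (hcE m)
  let c : ℕ → ℝ := fun m => (cE m).toReal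
  have hc0 : ∀ m, 0 ≤ c m := fun m => ENNReal.toReal_nonneg
  have hc : ∀ m, c m ≤ 2 * 3 ^ m := fun m =>
    ENNReal.toReal_le_of_le_ofReal (by positivity) (hcE m)
  obtain ⟨q, hqd⟩ : ∃ q : ℝ, q = (b : ℝ) + 2 := ⟨_, rfl⟩
  have hbq : (b : ℝ) - 1 = q - 3 := by rw [hqd]; ring
  have hq4 : 4 ≤ q := by rw [hqd]; exact hq
  have hq0 : 0 < q := by linarith
  have hqℓ : 4 ≤ q ^ ℓ := hq4.trans (le_self_pow₀ (by linarith) (by omega))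
  let w : ℕ → ℝ := fun m => (q - 3) / (2 * q ^ (m + 1))
  let v : ℕ → ℝ := fun m => ((q - 3) * q ^ (ℓ - m - 1) + 2) / (2 * (q ^ ℓ - 1))
  have hw0 : ∀ m, 0 ≤ w m := fun m => div_nonneg (by linarith) (by positivity)
  have hv0 : ∀ m, 0 ≤ v m := fun m => div_nonneg
    (add_nonneg (mul_nonneg (by linarith) (by positivity)) (by norm_num)) (by linarith)
  have hN : Nb b x = ∑' m, w m * c m := by
    unfold Nb nub
    rw [Measure.sum_apply _ measurableSet_Iic, ENNReal.tsum_toReal_eq]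
    · refine tsum_congr fun m => ?_
      rw [Measure.smul_apply, smul_eq_mul, ENNReal.toReal_mul, hbq, ← hqd,
        ENNReal.toReal_ofReal (hw0 m)]
    · intro m
      rw [Measure.smul_apply, smul_eq_mul]
      exact ENNReal.mul_ne_top ENNReal.ofReal_ne_top (hcT m)
  have hNL : NLb b ℓ x = ∑ m ∈ Finset.range ℓ, v m * c m := by
    unfold NLb nuLb
    rw [Measure.sum_apply _ measurableSet_Iic, ENNReal.tsum_toReal_eq, tsum_fintype,
      ← Fin.sum_univ_eq_sum_range (fun m => v m * c m)]
    · refine Finset.sum_congr rfl fun m _ => ?_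
      rw [Measure.smul_apply, smul_eq_mul, ENNReal.toReal_mul, hbq, ← hqd,
        ENNReal.toReal_ofReal (hv0 m)]
    · intro m
      rw [Measure.smul_apply, smul_eq_mul]
      exact ENNReal.mul_ne_top ENNReal.ofReal_ne_top (hcT m)
  have hr0 : 0 ≤ 3 / q := by positivity
  have hr1 : 3 / q ≤ 3 / 4 := by gcongr
  have hwc : ∀ m, w m * c m ≤ (3 / q) ^ m := fun m => by
    have h1 : w m ≤ 1 / (2 * q ^ m) := by
      change (q - 3) / (2 * q ^ (m + 1)) ≤ 1 / (2 * q ^ m)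
      rw [div_le_div_iff₀ (by positivity) (by positivity), pow_succ]
      nlinarith [pow_pos hq0 m]
    calc w m * c m ≤ 1 / (2 * q ^ m) * (2 * 3 ^ m) :=
          mul_le_mul h1 (hc m) (hc0 m) (by positivity)
      _ = _ := by
        rw [div_pow]
        field_simp
  have hgeo : Summable fun m : ℕ => (3 / q) ^ m :=
    summable_geometric_of_lt_one hr0 (by linarith)
  have hsum : Summable fun m => w m * c m :=
    Summable.of_nonneg_of_le (fun m => mul_nonneg (hw0 m) (hc0 m)) hwc hgeo
  have htail0 : 0 ≤ ∑' m, w (m + ℓ) * c (m + ℓ) :=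
    tsum_nonneg fun m => mul_nonneg (hw0 _) (hc0 _)
  have htail : ∑' m, w (m + ℓ) * c (m + ℓ) ≤ 4 * (3 / q) ^ ℓ := by
    calc ∑' m, w (m + ℓ) * c (m + ℓ) ≤ ∑' m : ℕ, (3 / q) ^ m * (3 / q) ^ ℓ := by
          refine Summable.tsum_le_tsum (fun m => ?_)
            ((summable_nat_add_iff ℓ).2 hsum) (hgeo.mul_right _)
          rw [← pow_add]
          exact hwc _
      _ = (1 - 3 / q)⁻¹ * (3 / q) ^ ℓ := by
          rw [tsum_mul_right, tsum_geometric_of_lt_one hr0 (by linarith)]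
      _ ≤ 4 * (3 / q) ^ ℓ := by
          gcongr
          rw [inv_le_comm₀ (by linarith) (by norm_num)]
          linarith
  have hdiff : ∀ m ∈ Finset.range ℓ, 0 ≤ v m - w m ∧ v m - w m ≤ 4 / q ^ ℓ := by
    intro m hm
    have hm' : m < ℓ := Finset.mem_range.1 hm
    have hsplit : q ^ ℓ = q ^ (ℓ - m - 1) * q ^ (m + 1) := by
      rw [← pow_add]
      congr 1
      omega
    have hpos : 0 < q ^ ℓ - 1 := by linarith
    have heq : v m - w m = (w m + 1) / (q ^ ℓ - 1) := by
      have h1 : v m = (w m * q ^ ℓ + 1) / (q ^ ℓ - 1) := by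
        change ((q - 3) * q ^ (ℓ - m - 1) + 2) / (2 * (q ^ ℓ - 1)) =
          ((q - 3) / (2 * q ^ (m + 1)) * q ^ ℓ + 1) / (q ^ ℓ - 1)
        rw [eq_div_iff hpos.ne', div_mul_eq_mul_div, div_eq_iff (by positivity)]
        have h2 : (q - 3) / (2 * q ^ (m + 1)) * q ^ ℓ = (q - 3) * q ^ (ℓ - m - 1) / 2 := by
          rw [hsplit]
          field_simp
        rw [h2]
        ring
      rw [h1, eq_div_iff hpos.ne', sub_mul, div_mul_cancel₀ _ hpos.ne']
      ring
    have hw1 : w m ≤ 1 := by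
      change (q - 3) / (2 * q ^ (m + 1)) ≤ 1
      rw [div_le_one (by positivity)]
      have : q ≤ q ^ (m + 1) := le_self_pow₀ (by linarith) (by omega)
      linarith
    rw [heq]
    refine ⟨div_nonneg (by linarith [hw0 m]) hpos.le, ?_⟩
    rw [div_le_div_iff₀ hpos (by linarith)]
    nlinarith [hw0 m]
  have hhead : |∑ m ∈ Finset.range ℓ, (v m - w m) * c m| ≤ 4 * (3 / q) ^ ℓ := by
    rw [abs_of_nonneg (Finset.sum_nonneg fun m hm => mul_nonneg (hdiff m hm).1 (hc0 m))]
    calc _ ≤ ∑ m ∈ Finset.range ℓ, 4 / q ^ ℓ * (2 * 3 ^ m) :=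
          Finset.sum_le_sum fun m hm =>
            mul_le_mul (hdiff m hm).2 (hc m) (hc0 m) (by positivity)
      _ = 4 / q ^ ℓ * (3 ^ ℓ - 1) := by
          rw [← Finset.mul_sum, ← Finset.mul_sum, geom_sum_eq (by norm_num)]
          ring
      _ ≤ 4 / q ^ ℓ * 3 ^ ℓ := by
          gcongr
          linarith
      _ = _ := by
          rw [div_pow]
          ring
  rw [hN, hNL, ← hsum.sum_add_tsum_nat_add ℓ, ← hqd]
  have hre : ∑ m ∈ Finset.range ℓ, v m * c m -
      (∑ m ∈ Finset.range ℓ, w m * c m + ∑' m, w (m + ℓ) * c (m + ℓ)) =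
      ∑ m ∈ Finset.range ℓ, (v m - w m) * c m - ∑' m, w (m + ℓ) * c (m + ℓ) := by
    simp only [sub_mul, Finset.sum_sub_distrib]
    ring
  rw [hre]
  have h3 := abs_le.1 hhead
  rw [abs_le]
  constructor <;> linarith [h3.1, h3.2]
end

section
/- The closure of ⋃_{m≥0} P_m equals the closure of ⋃_{n≥0} {x ∈ ℝ : R_b^∘n(x) ∈ {0, 2}}; that is, the closure of the set of all iterated R_b-preimages of the exceptional set E_b coincides with the closure of the backward orbit of the fixed points {0, 2} (both equal the Julia set of R_b). -/
open Set

lemma mem_S_of_Rb (b : ℕ) (x : ℝ) (h : Rb b x ∈ ⋃ m : ℕ, Pm b m) : x ∈ ⋃ m : ℕ, Pm b m := by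
  obtain ⟨m, hm⟩ := mem_iUnion.1 h
  refine mem_iUnion.2 ⟨m + 1, ?_⟩
  change (Rb b)^[m + 1] x ∈ Eb b
  rw [Function.iterate_succ_apply]
  exact hm

lemma Rb_Eb (b : ℕ) (hb : 2 ≤ b) {x : ℝ} (hx : x ∈ Eb b) : Rb b x ∈ ({0, 2} : Set ℝ) := by
  have hb' : (2 : ℝ) ≤ b := by exact_mod_cast hb
  have h0 : (b : ℝ) ≠ 0 := by positivity
  have h1 : (b : ℝ) + 1 ≠ 0 := by positivity
  rcases hx with rfl | hx
  · right
    simp only [Rb, mem_singleton_iff]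
    field_simp
    ring
  · left
    rw [mem_singleton_iff.1 hx]
    simp only [Rb]
    field_simp
    ring

lemma Rb_symm (b : ℕ) (hb : 2 ≤ b) (x : ℝ) : Rb b (2 - x) = 2 - Rb b x := by
  have hb' : (2 : ℝ) ≤ b := by exact_mod_cast hb
  have h0 : (b : ℝ) ≠ 0 := by positivity
  simp only [Rb]
  field_simp
  ring

lemma iter_symm (b : ℕ) (hb : 2 ≤ b) (n : ℕ) (x : ℝ) :
    (Rb b)^[n] (2 - x) = 2 - (Rb b)^[n] x := by
  induction n with
  | zero => rfl
  | succ k ih => rw [Function.iterate_succ_apply', Function.iterate_succ_apply', ih, Rb_symm b hb]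

lemma S_symm (b : ℕ) (hb : 2 ≤ b) (x : ℝ) (h : x ∈ ⋃ m : ℕ, Pm b m) :
    2 - x ∈ ⋃ m : ℕ, Pm b m := by
  obtain ⟨m, hm⟩ := mem_iUnion.1 h
  refine mem_iUnion.2 ⟨m, ?_⟩
  have hm' : (Rb b)^[m] x ∈ Eb b := hm
  change (Rb b)^[m] (2 - x) ∈ Eb b
  rw [iter_symm b hb]
  have h1 : (b : ℝ) + 1 ≠ 0 := by positivity
  rcases hm' with h | h
  · right
    rw [h, mem_singleton_iff]
    field_simp
    ring
  · left
    rw [mem_singleton_iff.1 h]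
    field_simp
    ring

lemma Rb_continuous (b : ℕ) : Continuous (Rb b) := by
  unfold Rb
  fun_prop

lemma exists_small (b : ℕ) (hb : 2 ≤ b) (k : ℕ) :
    ∃ y ∈ ⋃ m : ℕ, Pm b m, 0 ≤ y ∧ y ≤ 1 / ((b : ℝ) + 1) ∧ y ≤ (1 / 2 : ℝ) ^ k := by
  have hb' : (2 : ℝ) ≤ b := by exact_mod_cast hb
  have hle : 1 / ((b : ℝ) + 1) ≤ 1 := by
    rw [div_le_one (by positivity)]; linarith
  induction k with
  | zero =>
    refine ⟨1 / ((b : ℝ) + 1), mem_iUnion.2 ⟨0, ?_⟩, by positivity, le_rfl, by simpa using hle⟩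
    left; rfl
  | succ k ih =>
    obtain ⟨y, hyS, hy0, hy1, hyk⟩ := ih
    have hp : (0 : ℝ) ≤ 1 / ((b : ℝ) + 1) := by positivity
    have hR0 : Rb b 0 = 0 := by simp [Rb]
    have hR1 : Rb b (1 / ((b : ℝ) + 1)) = 2 := by
      have h0 : (b : ℝ) ≠ 0 := by positivity
      simp only [Rb]
      field_simp
      ring
    have := intermediate_value_Icc hp (Rb_continuous b).continuousOn
    rw [hR0, hR1] at this
    obtain ⟨z, ⟨hz0, hz1⟩, hz⟩ := this ⟨hy0, by linarith⟩
    refine ⟨z, mem_S_of_Rb b z (hz ▸ hyS), hz0, hz1, ?_⟩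
    have ht : ((b : ℝ) + 1) * z ≤ 1 := by
      rw [le_div_iff₀ (by positivity)] at hz1; linarith
    have key : 2 * z ≤ Rb b z := by
      have hq : 2 * (b : ℝ) ≤
          (((b : ℝ) + 1) * z - (2 * b + 1)) * (((b : ℝ) + 1) * z - (b + 2)) := by
        nlinarith
      have : Rb b z = (z / b) *
          ((((b : ℝ) + 1) * z - (2 * b + 1)) * (((b : ℝ) + 1) * z - (b + 2))) := by
        simp only [Rb]; ring
      rw [this]
      calc 2 * z = (z / b) * (2 * b) := by field_simp
        _ ≤ _ := mul_le_mul_of_nonneg_left hq (by positivity)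
    rw [pow_succ]
    linarith

lemma zero_mem (b : ℕ) (hb : 2 ≤ b) : (0 : ℝ) ∈ closure (⋃ m : ℕ, Pm b m) := by
  rw [Metric.mem_closure_iff]
  intro ε hε
  obtain ⟨k, hk⟩ := exists_pow_lt_of_lt_one hε (by norm_num : (1 / 2 : ℝ) < 1)
  obtain ⟨y, hyS, hy0, _, hyk⟩ := exists_small b hb k
  refine ⟨y, hyS, ?_⟩
  rw [dist_comm, Real.dist_eq, sub_zero, abs_of_nonneg hy0]
  linarith

lemma two_mem (b : ℕ) (hb : 2 ≤ b) : (2 : ℝ) ∈ closure (⋃ m : ℕ, Pm b m) := by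
  have := map_mem_closure (f := fun x : ℝ => 2 - x) (by fun_prop) (zero_mem b hb)
    (fun x hx => S_symm b hb x hx)
  simpa using this

/-- The derivative of `Rb` (in the variable `x - 1`). -/
lemma Rb_deriv (b : ℕ) (hb : 2 ≤ b) (x : ℝ) : HasStrictDerivAt (Rb b)
    ((3 * ((b : ℝ) + 1) ^ 2 * (x - 1) ^ 2 - ((b : ℝ) ^ 2 + b + 1)) / b) x := by
  have hb' : (2 : ℝ) ≤ b := by exact_mod_cast hb
  have h0 : (b : ℝ) ≠ 0 := by positivity
  have hid := hasStrictDerivAt_id x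
  have h := ((hid.div_const (b : ℝ)).mul
    ((hid.const_mul ((b : ℝ) + 1)).sub_const (2 * (b : ℝ) + 1))).mul
    ((hid.const_mul ((b : ℝ) + 1)).sub_const ((b : ℝ) + 2))
  refine HasStrictDerivAt.congr_deriv (f := Rb b) h ?_
  simp only [id, Pi.mul_apply]
  field_simp
  ring

lemma deriv_ne (b : ℕ) (hb : 2 ≤ b) (x : ℝ) (h0 : 0 ≤ Rb b x) (h2 : Rb b x ≤ 2) :
    (3 * ((b : ℝ) + 1) ^ 2 * (x - 1) ^ 2 - ((b : ℝ) ^ 2 + b + 1)) / b ≠ 0 := by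
  have hb' : (2 : ℝ) ≤ b := by exact_mod_cast hb
  have hb0 : (b : ℝ) ≠ 0 := by positivity
  intro h
  have h3 : 3 * ((b : ℝ) + 1) ^ 2 * (x - 1) ^ 2 = (b : ℝ) ^ 2 + b + 1 := by
    rcases div_eq_zero_iff.1 h with h | h
    · linarith
    · exact absurd h hb0
  have hsq : (b * (Rb b x - 1)) ^ 2 ≤ (b : ℝ) ^ 2 := by
    have : (Rb b x - 1) ^ 2 ≤ 1 := by nlinarith
    rw [mul_pow]
    nlinarith [sq_nonneg (b : ℝ)]
  have hform : b * (Rb b x - 1) =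
      (x - 1) * (((b : ℝ) + 1) ^ 2 * (x - 1) ^ 2 - ((b : ℝ) ^ 2 + b + 1)) := by
    simp only [Rb]
    field_simp
    ring
  generalize hB : (b : ℝ) ^ 2 + b + 1 = B at *
  have hA : ((b : ℝ) + 1) ^ 2 = B + b := by rw [← hB]; ring
  rw [hform] at hsq
  rw [hA] at h3 hsq
  have e1 : (B + b) * (x - 1) ^ 2 = B / 3 := by linarith
  have e2 : 27 * (B + b) * ((x - 1) * ((B + b) * (x - 1) ^ 2 - B)) ^ 2 = 4 * B ^ 3 := by
    rw [e1]
    linear_combination (12 * B ^ 2) * e1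
  have hBpos : 0 < B := by rw [← hB]; positivity
  have e3 : 4 * B ^ 3 ≤ 27 * (B + b) * (b : ℝ) ^ 2 := by
    rw [← e2]
    exact mul_le_mul_of_nonneg_left hsq (by positivity)
  have e4 : 0 < (B - 3 * b) * (2 * B + 3 * b) ^ 2 := by
    have : 0 < B - 3 * b := by rw [← hB]; nlinarith
    positivity
  nlinarith

lemma closure_pullback (b : ℕ) (hb : 2 ≤ b) (x : ℝ) (h0 : 0 ≤ Rb b x) (h2 : Rb b x ≤ 2)
    (h : Rb b x ∈ closure (⋃ m : ℕ, Pm b m)) : x ∈ closure (⋃ m : ℕ, Pm b m) := by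
  rw [mem_closure_iff_frequently] at h ⊢
  rw [← (Rb_deriv b hb x).map_nhds_eq (deriv_ne b hb x h0 h2), Filter.frequently_map] at h
  exact h.mono fun y hy => mem_S_of_Rb b y hy

lemma nonneg_of_Rb (b : ℕ) (hb : 2 ≤ b) (x : ℝ) (h0 : 0 ≤ Rb b x) : 0 ≤ x := by
  have hb' : (2 : ℝ) ≤ b := by exact_mod_cast hb
  by_contra hx
  push Not at hx
  have hq : 0 < (((b : ℝ) + 1) * x - (2 * b + 1)) * (((b : ℝ) + 1) * x - (b + 2)) := by
    apply mul_pos_of_neg_of_neg <;> nlinarith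
  have : Rb b x = (x / b) *
      ((((b : ℝ) + 1) * x - (2 * b + 1)) * (((b : ℝ) + 1) * x - (b + 2))) := by
    simp only [Rb]; ring
  rw [this] at h0
  have := mul_neg_of_neg_of_pos (div_neg_of_neg_of_pos hx (by linarith : (0 : ℝ) < b)) hq
  linarith

lemma le_two_of_Rb (b : ℕ) (hb : 2 ≤ b) (x : ℝ) (h2 : Rb b x ≤ 2) : x ≤ 2 := by
  have := nonneg_of_Rb b hb (2 - x) (by rw [Rb_symm b hb]; linarith)
  linarith

lemma mem_closure_of_iterate (b : ℕ) (hb : 2 ≤ b) (n : ℕ) : ∀ x : ℝ,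
    (Rb b)^[n] x ∈ ({0, 2} : Set ℝ) →
    (0 ≤ x ∧ x ≤ 2) ∧ x ∈ closure (⋃ m : ℕ, Pm b m) := by
  induction n with
  | zero =>
    rintro x (h | h)
    · have hx : x = 0 := h
      subst hx
      exact ⟨by norm_num, zero_mem b hb⟩
    · have hx : x = 2 := h
      subst hx
      exact ⟨by norm_num, two_mem b hb⟩
  | succ k ih =>
    intro x hx
    rw [Function.iterate_succ_apply] at hx
    obtain ⟨⟨h0, h2⟩, hc⟩ := ih _ hx
    exact ⟨⟨nonneg_of_Rb b hb x h0, le_two_of_Rb b hb x h2⟩, closure_pullback b hb x h0 h2 hc⟩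

/-- The closure of `⋃_{m≥0} P_m` (the iterated preimages of the exceptional set)
coincides with the closure of the backward orbit of the fixed points `{0, 2}`; both
equal the Julia set of `R_b`. -/
theorem closure_preimages_eq_closure_backward_orbit (b : ℕ) (hb : 2 ≤ b) :
    closure (⋃ m : ℕ, Pm b m) =
      closure (⋃ n : ℕ, {x : ℝ | (Rb b)^[n] x ∈ ({0, 2} : Set ℝ)}) := by
  apply Set.Subset.antisymm
  · apply closure_mono
    intro x hx
    obtain ⟨m, hm⟩ := mem_iUnion.1 hx
    refine mem_iUnion.2 ⟨m + 1, ?_⟩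
    have hm' : (Rb b)^[m] x ∈ Eb b := hm
    change (Rb b)^[m + 1] x ∈ ({0, 2} : Set ℝ)
    rw [Function.iterate_succ_apply']
    exact Rb_Eb b hb hm'
  · apply closure_minimal _ isClosed_closure
    intro x hx
    obtain ⟨n, hn⟩ := mem_iUnion.1 hx
    have hn' : (Rb b)^[n] x ∈ ({0, 2} : Set ℝ) := hn
    refine (mem_closure_of_iterate b hb n x ?_).2
    exact hn'
end
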